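/- Let μ, μ̃, ν, ν̃ ∈ P₂(ℝ) be probability measures on the real line. If μ* is a backward projection of μ onto the convex order cone below ν, and μ̃* is a backward projection of μ̃ onto the convex order cone below ν̃, then W₂(μ*, μ̃*) ≤ W₂(μ, μ̃) + W₂(ν, ν̃). -/

import Mathlib

/-!
All measures are represented by their quantile functions on `(0, 1)`. Write `a`, `b`, `x` for those
of `μ`, `ν` and the projection `μs`, and `p = a - x` for the displacement; primes denote the second
projection problem. In dimension one `W₂` is the `L²` distance of quantile functions (`W2sq_eq`).

Testing the optimality of `μs` against competitors of two kinds yields: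
* `∫ p (b - x) ≤ 0`, by moving `x` linearly towards `b` (`projection_orthogonal`);
* `p` is increasing, by moving `x(u)` and `x(v)` towards each other for all pairs `(u, v)` with
  `(p u - p v) (x u - x v) < 0`, which decreases the law in convex order
  (`ae_displacement`, `displacement_monotone`).

A Hardy–Littlewood inequality (`hardy_littlewood`) shows that an increasing function pairs
nonnegatively with `b' - x'`, whenever `μs'` is below `ν'` in convex order. Hence `∫ p (b' - x') ≥ 0`
and `∫ p' (b - x) ≥ 0`, so that `∫ (p - p') ((b - x) - (b' - x')) ≤ 0`. With `α = a - a'`,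
`β = b - b'` and `ξ = x - x'` this reads `⟪α - ξ, β - ξ⟫ ≤ 0`, i.e. `ξ` lies in the ball with
diameter `[α, β]`, and `‖ξ‖ ≤ ‖α‖ + ‖β‖` follows (`norm_le_of_inner_nonpos`).
-/

open MeasureTheory

noncomputable section

variable {V : Type*} [NormedAddCommGroup V] [NormedSpace ℝ V]
  [MeasurableSpace V] [BorelSpace V]

/-- `π` is a coupling of `μ` and `ν`. -/
def IsCoupling (π : Measure (V × V)) (μ ν : Measure V) : Prop :=
  IsProbabilityMeasure π ∧ π.map Prod.fst = μ ∧ π.map Prod.snd = ν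

/-- Squared 2-Wasserstein distance, as infimum of quadratic cost over couplings. -/
def W2sq (μ ν : Measure V) : ℝ :=
  sInf {c : ℝ | ∃ π : Measure (V × V), IsCoupling π μ ν ∧ c = ∫ p, ‖p.1 - p.2‖ ^ 2 ∂π}

/-- The 2-Wasserstein distance. -/
def W2 (μ ν : Measure V) : ℝ := Real.sqrt (W2sq μ ν)

/-- `μ` is a Borel probability measure with finite second moment. -/
def IsP2 (μ : Measure V) : Prop :=
  IsProbabilityMeasure μ ∧ Integrable (fun x => ‖x‖ ^ 2) μ

/-- Convex order: `∫ φ dμ ≤ ∫ φ dν` for every convex `φ` for which both integrals exist. -/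
def ConvexOrder (μ ν : Measure V) : Prop :=
  ∀ φ : V → ℝ, ConvexOn ℝ Set.univ φ → Integrable φ μ → Integrable φ ν →
    ∫ x, φ x ∂μ ≤ ∫ x, φ x ∂ν

/-- `X` is a Borel map, square-integrable w.r.t. `ρ₀`. -/
def MemL2 (ρ₀ : Measure V) (X : V → V) : Prop :=
  Measurable X ∧ Integrable (fun x => ‖X x‖ ^ 2) ρ₀

/-- `μs` is a backward projection of `μ` onto the convex order cone below `ν`. -/
def IsBackwardProj (ν μ μs : Measure V) : Prop :=
  IsP2 μs ∧ ConvexOrder μs ν ∧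
    ∀ ρ : Measure V, IsP2 ρ → ConvexOrder ρ ν → W2 μs μ ≤ W2 ρ μ

/-- `ρs` is a forward projection of `ν` above `μ`. -/
def IsForwardProj (μ ν ρs : Measure V) : Prop :=
  IsP2 ρs ∧ ConvexOrder μ ρs ∧
    ∀ ρ : Measure V, IsP2 ρ → ConvexOrder μ ρ → W2 ρs ν ≤ W2 ρ ν

/-- `ρs` is a metric extrapolation of `(ν₀, ν₁)` at time `t`. -/
def IsMetricExtrap (t : ℝ) (ν₀ ν₁ ρs : Measure V) : Prop :=
  IsP2 ρs ∧ ∀ ρ : Measure V, IsP2 ρ →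
    W2sq ρs ν₁ / (2 * (t - 1)) - W2sq ρs ν₀ / (2 * t) ≤
      W2sq ρ ν₁ / (2 * (t - 1)) - W2sq ρ ν₀ / (2 * t)

/-- Constant-speed minimizing geodesic on `[a,b]` for `W₂`. -/
def IsGeodesic (a b : ℝ) (γ : ℝ → Measure V) : Prop :=
  (∀ s ∈ Set.Icc a b, IsP2 (γ s)) ∧
    ∀ s₁ ∈ Set.Icc a b, ∀ s₂ ∈ Set.Icc a b,
      W2 (γ s₁) (γ s₂) = |s₁ - s₂| / (b - a) * W2 (γ a) (γ b)

/-- Topological support of a measure. -/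
def msupport (μ : Measure V) : Set V := {x | ∀ U ∈ nhds x, μ U ≠ 0}

/-- Regular measures: absolutely continuous, compact convex support,
density bounded above and below on the support. -/
def IsP2reg {d : ℕ} (μ : Measure (EuclideanSpace ℝ (Fin d))) : Prop :=
  IsP2 μ ∧ μ ≪ volume ∧ IsCompact (msupport μ) ∧ Convex ℝ (msupport μ) ∧
    ∃ m M : ℝ, 0 < m ∧ 0 < M ∧
      ∀ᵐ x ∂(volume : Measure (EuclideanSpace ℝ (Fin d))),
        x ∈ msupport μ → m ≤ (μ.rnDeriv volume x).toReal ∧ (μ.rnDeriv volume x).toReal ≤ M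

open Set ProbabilityTheory Filter Topology

/-! ### Quantile functions -/

/-- Lebesgue measure on `(0, 1)`: the probability space that carries all quantile functions. -/
def unitMeas : Measure ℝ := volume.restrict (Ioo 0 1)

instance : IsProbabilityMeasure unitMeas :=
  ⟨by simp [unitMeas]⟩

lemma ae_unitMeas_mem : ∀ᵐ u ∂unitMeas, u ∈ Ioo (0 : ℝ) 1 :=
  ae_restrict_mem measurableSet_Ioo

/-- The quantile function (generalized inverse of the distribution function) of `μ`, set to `0`
outside `(0, 1)` so that it is Borel on all of `ℝ`. -/
def quant (μ : Measure ℝ) : ℝ → ℝ :=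
  (Ioo (0 : ℝ) 1).indicator fun u => sInf {x | u ≤ cdf μ x}

lemma quant_le_iff (μ : Measure ℝ) {u : ℝ} (hu : u ∈ Ioo (0 : ℝ) 1) (x : ℝ) :
    quant μ u ≤ x ↔ u ≤ cdf μ x := by
  have hb : BddBelow {x | u ≤ cdf μ x} := by
    obtain ⟨m, hm⟩ := ((tendsto_cdf_atBot μ).eventually (gt_mem_nhds hu.1)).exists
    refine ⟨m, fun y hy => ?_⟩
    by_contra! h
    exact absurd (hy.trans (monotone_cdf μ h.le)) (not_le.2 hm)
  have hne : {x | u ≤ cdf μ x}.Nonempty := by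
    obtain ⟨m, hm⟩ := ((tendsto_cdf_atTop μ).eventually (lt_mem_nhds hu.2)).exists
    exact ⟨m, hm.le⟩
  rw [quant, indicator_of_mem hu]
  refine ⟨fun h => ?_, fun h => csInf_le hb h⟩
  -- right-continuity of the distribution function: the infimum is attained
  have hlim : Tendsto (cdf μ) (𝓝[>] x) (𝓝 (cdf μ x)) :=
    ((cdf μ).right_continuous x).mono_left (nhdsWithin_mono _ Ioi_subset_Ici_self)
  refine ge_of_tendsto hlim ?_
  filter_upwards [self_mem_nhdsWithin] with y hy
  obtain ⟨z, hz, hzy⟩ := exists_lt_of_csInf_lt hne (lt_of_le_of_lt h hy)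
  exact le_trans hz (monotone_cdf μ hzy.le)

lemma quant_monotoneOn (μ : Measure ℝ) : MonotoneOn (quant μ) (Ioo 0 1) := by
  intro u hu v hv huv
  rw [quant_le_iff μ hu]
  exact huv.trans ((quant_le_iff μ hv _).1 le_rfl)

lemma measurable_quant (μ : Measure ℝ) : Measurable (quant μ) := by
  refine measurable_of_Iic fun x => ?_
  have : quant μ ⁻¹' Iic x =
      (Ioo 0 1 ∩ Iic (cdf μ x)) ∪ ((Ioo (0 : ℝ) 1)ᶜ ∩ {_u | (0 : ℝ) ≤ x}) := by
    ext u
    by_cases hu : u ∈ Ioo (0 : ℝ) 1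
    · simp only [mem_preimage, mem_Iic, quant_le_iff μ hu, mem_union, mem_inter_iff, hu,
        mem_compl_iff, not_true, true_and, false_and, or_false]
    · have h0 : quant μ u = 0 := indicator_of_notMem hu _
      simp only [mem_preimage, mem_Iic, h0, mem_union, mem_inter_iff, hu, mem_compl_iff,
        not_false_iff, true_and, false_and, false_or, mem_ofPred_eq]
  rw [this]
  exact (measurableSet_Ioo.inter measurableSet_Iic).union
    (measurableSet_Ioo.compl.inter (MeasurableSet.const _))

lemma map_quant (μ : Measure ℝ) [IsProbabilityMeasure μ] : unitMeas.map (quant μ) = μ := by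
  have := Measure.isProbabilityMeasure_map (μ := unitMeas) (measurable_quant μ).aemeasurable
  refine Measure.ext_of_Iic _ _ fun x => ?_
  rw [Measure.map_apply (measurable_quant μ) measurableSet_Iic, ← ofReal_cdf μ x, unitMeas,
    Measure.restrict_apply (measurable_quant μ measurableSet_Iic)]
  have h1 : quant μ ⁻¹' Iic x ∩ Ioo 0 1 = Ioo 0 1 ∩ Iic (cdf μ x) := by
    ext u
    by_cases hu : u ∈ Ioo (0 : ℝ) 1
    · simp only [mem_inter_iff, mem_preimage, mem_Iic, quant_le_iff μ hu, hu, and_true, true_and]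
    · simp only [mem_inter_iff, hu, and_false, false_and]
  rw [h1]
  have h2 : (Ioo 0 1 ∩ Iic (cdf μ x) : Set ℝ) =ᵐ[volume] (Ioc 0 (cdf μ x) : Set ℝ) := by
    have : (Ioc 0 (cdf μ x) : Set ℝ) = Ioc 0 1 ∩ Iic (cdf μ x) := by
      ext u
      have := cdf_le_one μ x
      simp only [mem_Ioc, mem_inter_iff, mem_Iic]
      constructor
      · rintro ⟨h, h'⟩; exact ⟨⟨h, h'.trans this⟩, h'⟩
      · rintro ⟨⟨h, _⟩, h'⟩; exact ⟨h, h'⟩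
    rw [this]
    exact Ioo_ae_eq_Ioc.inter (ae_eq_refl _)
  rw [measure_congr h2]
  simp

lemma memLp_of_map {Ω : Type*} [MeasurableSpace Ω] {Q : Measure Ω} {μ : Measure ℝ} (hμ : IsP2 μ)
    {X : Ω → ℝ} (hX : Measurable X) (hm : Q.map X = μ) : MemLp X 2 Q := by
  rw [memLp_two_iff_integrable_sq hX.aestronglyMeasurable]
  have h := hμ.2
  rw [← hm, integrable_map_measure (by fun_prop) hX.aemeasurable] at h
  simpa [Function.comp_def] using h

lemma isP2_map {Ω : Type*} [MeasurableSpace Ω] {Q : Measure Ω} [IsProbabilityMeasure Q]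
    {X : Ω → ℝ} (hX : Measurable X) (h2 : MemLp X 2 Q) : IsP2 (Q.map X) := by
  refine ⟨Measure.isProbabilityMeasure_map hX.aemeasurable, ?_⟩
  rw [integrable_map_measure (by fun_prop) hX.aemeasurable]
  simpa [Function.comp_def] using h2.integrable_sq

lemma memLp_quant {μ : Measure ℝ} (hμ : IsP2 μ) : MemLp (quant μ) 2 unitMeas :=
  have := hμ.1
  memLp_of_map hμ (measurable_quant μ) (map_quant μ)

/-! ### Wasserstein distance and convex order of laws of random variables -/

/-- Every pair of random variables gives a coupling of their laws. -/
lemma W2sq_map_le {Ω : Type*} [MeasurableSpace Ω] {Q : Measure Ω} [IsProbabilityMeasure Q]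
    {X Y : Ω → ℝ} (hX : Measurable X) (hY : Measurable Y) :
    W2sq (Q.map X) (Q.map Y) ≤ ∫ ω, (X ω - Y ω) ^ 2 ∂Q := by
  refine csInf_le ⟨0, ?_⟩ ⟨Q.map fun ω => (X ω, Y ω), ⟨?_, ?_, ?_⟩, ?_⟩
  · rintro c ⟨π, -, rfl⟩
    exact integral_nonneg fun _ => by positivity
  · exact Measure.isProbabilityMeasure_map (hX.prodMk hY).aemeasurable
  · rw [Measure.map_map measurable_fst (hX.prodMk hY)]; rfl
  · rw [Measure.map_map measurable_snd (hX.prodMk hY)]; rfl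
  · rw [integral_map (hX.prodMk hY).aemeasurable (by fun_prop)]
    simp

lemma W2sq_nonneg (μ ν : Measure ℝ) : 0 ≤ W2sq μ ν := by
  refine Real.sInf_nonneg ?_
  rintro c ⟨π, -, rfl⟩
  exact integral_nonneg fun _ => by positivity

/-- A function of at most linear growth; when measurable, such functions are integrable
for every measure in `P₂(ℝ)`. -/
def LinGrowth (φ : ℝ → ℝ) : Prop := ∃ C : ℝ, ∀ x, |φ x| ≤ C * (1 + |x|)

lemma LinGrowth.integrable {φ : ℝ → ℝ} (h : LinGrowth φ) (hφ : Measurable φ) {Ω : Type*}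
    [MeasurableSpace Ω] {Q : Measure Ω} [IsProbabilityMeasure Q]
    {X : Ω → ℝ} (h2 : MemLp X 2 Q) : Integrable (fun ω => φ (X ω)) Q := by
  obtain ⟨C, hC⟩ := h
  have hX : Integrable X Q := h2.integrable (by norm_num)
  refine Integrable.mono' (((integrable_const 1).add hX.abs).const_mul C)
    (hφ.comp_aemeasurable hX.aemeasurable).aestronglyMeasurable (ae_of_all _ fun ω => ?_)
  simpa using hC (X ω)

lemma convexOn_measurable {φ : ℝ → ℝ} (h : ConvexOn ℝ univ φ) : Measurable φ :=
  (continuousOn_univ.1 (h.continuousOn isOpen_univ)).measurable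

/-- Convex functions of linear growth suffice to test the convex order, because every convex
function is an increasing limit of finite maxima of affine functions. -/
lemma convexOrder_of_linGrowth {ρ ν : Measure ℝ} (hρ : IsP2 ρ) (hν : IsP2 ν)
    (h : ∀ φ : ℝ → ℝ, ConvexOn ℝ univ φ → LinGrowth φ → ∫ x, φ x ∂ρ ≤ ∫ x, φ x ∂ν) :
    ConvexOrder ρ ν := by
  intro φ hφ hiρ hiν
  have := hρ.1
  have := hν.1
  have hcont : Continuous φ := continuousOn_univ.1 (hφ.continuousOn isOpen_univ)
  obtain ⟨l, c, hle, hsup⟩ := hφ.real_univ_sSup_of_nat_affine_eq hcont.lowerSemicontinuous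
  set f : ℕ → ℝ → ℝ := fun i x => l i x + c i with hf
  have hle' : ∀ i x, f i x ≤ φ x := fun i x => hle i x
  have hsup' : ∀ x, ⨆ i, f i x = φ x := fun x => by
    have := congrFun hsup x
    rw [iSup_apply] at this
    exact this
  have hfconv : ∀ i, ConvexOn ℝ univ (f i) := fun i =>
    ((l i).toLinearMap.convexOn convex_univ).add_const _
  have hfgrow : ∀ i, LinGrowth (f i) := fun i => by
    refine ⟨‖l i‖ + |c i|, fun x => ?_⟩
    have h1 : |l i x| ≤ ‖l i‖ * |x| := (l i).le_opNorm x
    have h2 := abs_add_le (l i x) (c i)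
    have := abs_nonneg x
    have := abs_nonneg (c i)
    have := norm_nonneg (l i)
    simp only [hf]
    nlinarith [mul_nonneg (abs_nonneg (c i)) (abs_nonneg x)]
  set g : ℕ → ℝ → ℝ := fun n => partialSups f n with hg
  have hg1 : ∀ n, ConvexOn ℝ univ (g n) ∧ LinGrowth (g n) := by
    intro n
    induction n with
    | zero => simpa [hg] using ⟨hfconv 0, hfgrow 0⟩
    | succ n ih =>
      have : g (n + 1) = g n ⊔ f (n + 1) := partialSups_add_one f n
      rw [this]
      refine ⟨ih.1.sup (hfconv _), ?_⟩
      obtain ⟨C, hC⟩ := ih.2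
      obtain ⟨D, hD⟩ := hfgrow (n + 1)
      refine ⟨max C D, fun x => ?_⟩
      have hx : 0 ≤ 1 + |x| := by positivity
      have h3 : |g n x ⊔ f (n + 1) x| ≤ max |g n x| |f (n + 1) x| := abs_max_le_max_abs_abs
      refine h3.trans (max_le ((hC x).trans ?_) ((hD x).trans ?_))
      · exact mul_le_mul_of_nonneg_right (le_max_left _ _) hx
      · exact mul_le_mul_of_nonneg_right (le_max_right _ _) hx
  have hgle : ∀ n x, g n x ≤ φ x := fun n x => by
    have : partialSups f n ≤ φ := partialSups_le _ _ _ fun j _ => fun x => hle' j x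
    exact this x
  have hfg : ∀ n i, i ≤ n → ∀ x, f i x ≤ g n x := fun n i hi x =>
    le_partialSups_of_le f hi x
  have hlim : ∀ x, Tendsto (fun n => g n x) atTop (𝓝 (φ x)) := by
    intro x
    refine tendsto_order.2 ⟨fun a ha => ?_, fun a ha =>
      Eventually.of_forall fun n => (hgle n x).trans_lt ha⟩
    rw [← hsup' x] at ha
    obtain ⟨i, hi⟩ := exists_lt_of_lt_ciSup ha
    filter_upwards [eventually_ge_atTop i] with n hn
    exact hi.trans_le (hfg n i hn x)
  have key : ∀ κ : Measure ℝ, IsP2 κ → Integrable φ κ →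
      Tendsto (fun n => ∫ x, g n x ∂κ) atTop (𝓝 (∫ x, φ x ∂κ)) := by
    intro κ hκ hi
    have := hκ.1
    have hid : MemLp (fun x : ℝ => x) 2 κ := memLp_of_map hκ measurable_id Measure.map_id
    refine tendsto_integral_of_dominated_convergence (fun x => |φ x| + |f 0 x|)
      (fun n => (convexOn_measurable (hg1 n).1).aestronglyMeasurable)
      (hi.abs.add ((hfgrow 0).integrable (convexOn_measurable (hfconv 0)) hid).abs)
      (fun n => ae_of_all _ fun x => ?_) (ae_of_all _ hlim)
    rw [Real.norm_eq_abs, abs_le]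
    have h1 := hfg n 0 (Nat.zero_le n) x
    have h2 := hgle n x
    constructor
    · linarith [neg_abs_le (f 0 x), abs_nonneg (φ x)]
    · linarith [le_abs_self (φ x), abs_nonneg (f 0 x)]
  exact le_of_tendsto_of_tendsto' (key ρ hρ hiρ) (key ν hν hiν)
    fun n => h _ (hg1 n).1 (hg1 n).2

/-! ### Hardy–Littlewood inequality -/

/-- The layer-cake kernel: `∫ layer z s ds = z` for every real `z`, of either sign. -/
def layer (z s : ℝ) : ℝ := (if s < z then 1 else 0) - (if s < 0 then 1 else 0)

lemma layer_eq (z : ℝ) :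
    layer z = fun s => (Ico 0 z).indicator 1 s - (Ico z 0).indicator 1 s := by
  funext s
  simp only [layer, indicator, mem_Ico, Pi.one_apply]
  split_ifs <;> grind

lemma abs_layer_eq (z : ℝ) :
    (fun s => |layer z s|) = fun s => (Ico 0 z).indicator 1 s + (Ico z 0).indicator 1 s := by
  funext s
  simp only [layer, indicator, mem_Ico, Pi.one_apply]
  split_ifs <;> grind

lemma integrable_ind_Ico (a b : ℝ) : Integrable ((Ico a b).indicator (1 : ℝ → ℝ)) :=
  (integrable_indicator_iff measurableSet_Ico).2
    (integrableOn_const (C := (1 : ℝ)) (by simp) (by simp))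

lemma integral_ind_Ico (a b : ℝ) : ∫ s, (Ico a b).indicator (1 : ℝ → ℝ) s = max (b - a) 0 := by
  rw [integral_indicator_one measurableSet_Ico]
  simp [Measure.real, ENNReal.toReal_ofReal']

lemma integrable_layer (z : ℝ) : Integrable (layer z) := by
  rw [layer_eq]
  exact (integrable_ind_Ico _ _).sub (integrable_ind_Ico _ _)

lemma integral_layer (z : ℝ) : ∫ s, layer z s = z := by
  rw [layer_eq, integral_sub (integrable_ind_Ico _ _) (integrable_ind_Ico _ _),
    integral_ind_Ico, integral_ind_Ico]
  rcases le_total z 0 with h | h <;> simp [h]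

lemma integral_abs_layer (z : ℝ) : ∫ s, |layer z s| = |z| := by
  rw [abs_layer_eq, integral_add (integrable_ind_Ico _ _) (integrable_ind_Ico _ _),
    integral_ind_Ico, integral_ind_Ico]
  rcases le_total z 0 with h | h <;> simp [h, abs_of_nonneg, abs_of_nonpos]

lemma measurable_layer : Measurable fun z : ℝ × ℝ => layer z.1 z.2 := by
  unfold layer
  exact (Measurable.ite (measurableSet_lt measurable_snd measurable_fst) measurable_const
    measurable_const).sub (Measurable.ite (measurableSet_lt measurable_snd measurable_const)
    measurable_const measurable_const)

lemma layer_cake {Ω : Type*} [MeasurableSpace Ω] {Q : Measure Ω} [IsProbabilityMeasure Q]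
    {X Y : Ω → ℝ} (hX : Measurable X) (hY : Measurable Y)
    (hXY : Integrable (fun ω => X ω * Y ω) Q) :
    Integrable (fun s => ∫ ω, Y ω * layer (X ω) s ∂Q) ∧
      ∫ ω, X ω * Y ω ∂Q = ∫ s, ∫ ω, Y ω * layer (X ω) s ∂Q := by
  have hm : Measurable fun q : Ω × ℝ => Y q.1 * layer (X q.1) q.2 :=
    (hY.comp measurable_fst).mul
      (measurable_layer.comp ((hX.comp measurable_fst).prodMk measurable_snd))
  have hint : Integrable (fun q : Ω × ℝ => Y q.1 * layer (X q.1) q.2) (Q.prod volume) := by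
    refine (integrable_prod_iff hm.aestronglyMeasurable).2
      ⟨ae_of_all _ fun ω => (integrable_layer (X ω)).const_mul (Y ω), ?_⟩
    simp only [norm_mul, Real.norm_eq_abs, integral_const_mul, integral_abs_layer]
    refine hXY.abs.congr (ae_of_all _ fun ω => ?_)
    simp only [abs_mul, mul_comm]
  refine ⟨hint.integral_prod_right, ?_⟩
  have := integral_integral_swap (f := fun ω s => Y ω * layer (X ω) s) hint
  rw [← this]
  refine integral_congr_ae (ae_of_all _ fun ω => ?_)
  simp only [integral_const_mul, integral_layer, mul_comm]

lemma integrable_mul_ite {Ω : Type*} [MeasurableSpace Ω] {Q : Measure Ω}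
    {X Y : Ω → ℝ} (hX : Measurable X) (hY : Integrable Y Q) (s : ℝ) :
    Integrable (fun ω => Y ω * if s < X ω then 1 else 0) Q := by
  have : (fun ω => Y ω * if s < X ω then 1 else 0) = {ω | s < X ω}.indicator Y := by
    funext ω
    simp [indicator]
  rw [this]
  exact hY.indicator (measurableSet_lt measurable_const hX)

lemma integral_mul_layer {Ω : Type*} [MeasurableSpace Ω] {Q : Measure Ω} {X Y : Ω → ℝ}
    (hX : Measurable X) (hY : Integrable Y Q) (s : ℝ) :
    ∫ ω, Y ω * layer (X ω) s ∂Q =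
      ∫ ω, Y ω * (if s < X ω then 1 else 0) ∂Q - (∫ ω, Y ω ∂Q) * (if s < 0 then 1 else 0) := by
  simp only [layer, mul_sub]
  rw [integral_sub (integrable_mul_ite hX hY s) (hY.mul_const _), integral_mul_const]

/-- The level-set form of the Hardy–Littlewood inequality. With `c` the infimum of `b` over
`{p > s}`, both sides are compared with the expectation of the positive part of
`· - c`, which is a convex function. -/
lemma level_le {Ω : Type*} [MeasurableSpace Ω] {Q : Measure Ω} [IsProbabilityMeasure Q]
    {X Y : Ω → ℝ} (hX : Measurable X) (hY : MemLp Y 2 Q)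
    {p b : ℝ → ℝ} (hp : Measurable p) (hb2 : MemLp b 2 unitMeas)
    (hb : MonotoneOn b (Ioo 0 1))
    (hpm : ∃ G : Set ℝ, (∀ᵐ u ∂unitMeas, u ∈ G) ∧ MonotoneOn p G)
    (hlaw : Q.map X = unitMeas.map p)
    (hco : ∀ φ : ℝ → ℝ, ConvexOn ℝ univ φ → LinGrowth φ →
      ∫ ω, φ (Y ω) ∂Q ≤ ∫ u, φ (b u) ∂unitMeas) (s : ℝ) :
    ∫ ω, Y ω * (if s < X ω then 1 else 0) ∂Q ≤
      ∫ u, b u * (if s < p u then 1 else 0) ∂unitMeas := by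
  have hYi : Integrable Y Q := hY.integrable (by norm_num)
  have hbi : Integrable b unitMeas := hb2.integrable (by norm_num)
  obtain ⟨G, hG, hGm⟩ := hpm
  have hgood : ∀ᵐ u ∂unitMeas, u ∈ G ∧ u ∈ Ioo (0 : ℝ) 1 := hG.and ae_unitMeas_mem
  -- transport of almost sure and expectation statements about `X`
  have haeX : ∀ S : Set ℝ, MeasurableSet S → (∀ᵐ u ∂unitMeas, p u ∈ S) → ∀ᵐ ω ∂Q, X ω ∈ S := by
    intro S hS h
    have h' := (ae_map_iff (p := fun x => x ∈ S) hp.aemeasurable hS).2 h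
    rw [← hlaw] at h'
    exact (ae_map_iff (p := fun x => x ∈ S) hX.aemeasurable hS).1 h'
  by_cases hT : ∃ u, (u ∈ G ∧ u ∈ Ioo (0 : ℝ) 1) ∧ s < p u
  swap
  · have h1 : ∀ᵐ u ∂unitMeas, p u ∈ Iic s := hgood.mono fun u hu => by
      by_contra h
      exact hT ⟨u, hu, not_le.1 h⟩
    have h2 := haeX _ measurableSet_Iic h1
    rw [integral_eq_zero_of_ae, integral_eq_zero_of_ae]
    · filter_upwards [h1] with u hu
      simp [not_lt.2 (mem_Iic.1 hu)]
    · filter_upwards [h2] with u hu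
      simp [not_lt.2 (mem_Iic.1 hu)]
  by_cases hT' : ∃ u, (u ∈ G ∧ u ∈ Ioo (0 : ℝ) 1) ∧ p u ≤ s
  swap
  · have h1 : ∀ᵐ u ∂unitMeas, p u ∈ Ioi s := hgood.mono fun u hu => by
      by_contra h
      exact hT' ⟨u, hu, not_lt.1 h⟩
    have h2 := haeX _ measurableSet_Ioi h1
    have e1 : ∫ ω, Y ω * (if s < X ω then 1 else 0) ∂Q = ∫ ω, Y ω ∂Q :=
      integral_congr_ae (h2.mono fun ω h => by simp [mem_Ioi.1 h])
    have e2 : ∫ u, b u * (if s < p u then 1 else 0) ∂unitMeas = ∫ u, b u ∂unitMeas :=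
      integral_congr_ae (h1.mono fun ω h => by simp [mem_Ioi.1 h])
    rw [e1, e2]
    exact hco (fun x => x) (convexOn_id convex_univ) ⟨1, fun x => by simp⟩
  set T : Set ℝ := {u | (u ∈ G ∧ u ∈ Ioo (0 : ℝ) 1) ∧ s < p u} with hTdef
  have hsep : ∀ v, (v ∈ G ∧ v ∈ Ioo (0 : ℝ) 1) → p v ≤ s → ∀ y ∈ image b T, b v ≤ y := by
    rintro v hv hvs _ ⟨u, hu, rfl⟩
    refine hb hv.2 hu.1.2 ?_
    by_contra! h
    exact absurd (hu.2.trans_le (hGm hu.1.1 hv.1 h.le)) (not_lt.2 hvs)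
  obtain ⟨v₀, hv₀, hv₀s⟩ := hT'
  have hTne : (image b T).Nonempty := by
    obtain ⟨u, hu⟩ := hT
    exact ⟨_, u, hu, rfl⟩
  set c := sInf (image b T) with hc
  have hup : ∀ᵐ u ∂unitMeas, (b u - c) * (if s < p u then 1 else 0) = max (b u - c) 0 := by
    filter_upwards [hgood] with u hu
    split_ifs with h
    · have : c ≤ b u := csInf_le ⟨b v₀, hsep v₀ hv₀ hv₀s⟩ ⟨u, ⟨hu, h⟩, rfl⟩
      rw [mul_one, max_eq_left (by linarith)]
    · have : b u ≤ c := le_csInf hTne (hsep u hu (not_lt.1 h))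
      rw [mul_zero, max_eq_right (by linarith)]
  have hφc : ConvexOn ℝ univ fun x : ℝ => max (x - c) 0 :=
    ((convexOn_id convex_univ).sub (concaveOn_const c convex_univ)).sup
      (convexOn_const 0 convex_univ)
  have hφg : LinGrowth fun x : ℝ => max (x - c) 0 := by
    refine ⟨1 + |c|, fun x => ?_⟩
    have h1 : |max (x - c) 0| ≤ |x - c| := by
      rw [abs_of_nonneg (le_max_right _ _)]
      exact max_le (le_abs_self _) (abs_nonneg _)
    have := abs_sub x c
    nlinarith [abs_nonneg x, abs_nonneg c, mul_nonneg (abs_nonneg c) (abs_nonneg x)]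
  have hφ := hco _ hφc hφg
  have hmass : ∫ ω, (if s < X ω then (1 : ℝ) else 0) ∂Q =
      ∫ u, (if s < p u then (1 : ℝ) else 0) ∂unitMeas := by
    have hmeas : Measurable fun x : ℝ => if s < x then (1 : ℝ) else 0 :=
      Measurable.ite measurableSet_Ioi measurable_const measurable_const
    rw [← integral_map (f := fun x : ℝ => if s < x then (1 : ℝ) else 0) hX.aemeasurable
      hmeas.aestronglyMeasurable, hlaw,
      integral_map hp.aemeasurable hmeas.aestronglyMeasurable]
  have hYc : Integrable (fun ω => Y ω - c) Q := hYi.sub (integrable_const c)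
  have h1 : ∫ ω, (Y ω - c) * (if s < X ω then 1 else 0) ∂Q ≤ ∫ ω, max (Y ω - c) 0 ∂Q := by
    refine integral_mono (integrable_mul_ite hX hYc s) hYc.pos_part fun ω => ?_
    dsimp only
    split_ifs
    · rw [mul_one]; exact le_max_left _ _
    · rw [mul_zero]; exact le_max_right _ _
  have h2 := integral_congr_ae hup
  have e1 : ∫ ω, (Y ω - c) * (if s < X ω then 1 else 0) ∂Q =
      ∫ ω, Y ω * (if s < X ω then 1 else 0) ∂Q - c * ∫ ω, (if s < X ω then (1 : ℝ) else 0) ∂Q := by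
    simp_rw [sub_mul]
    rw [integral_sub (integrable_mul_ite hX hYi s) (integrable_mul_ite hX (integrable_const c) s),
      integral_const_mul]
  have e2 : ∫ u, (b u - c) * (if s < p u then 1 else 0) ∂unitMeas =
      ∫ u, b u * (if s < p u then 1 else 0) ∂unitMeas -
        c * ∫ u, (if s < p u then (1 : ℝ) else 0) ∂unitMeas := by
    simp_rw [sub_mul]
    rw [integral_sub (integrable_mul_ite hp hbi s) (integrable_mul_ite hp (integrable_const c) s),
      integral_const_mul]
  rw [hmass] at e1
  linarith

/-- A Hardy–Littlewood inequality up to the convex order: if `X` has the law of the increasing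
function `p`, and the law of `Y` is dominated in convex order by that of the increasing function
`b`, then `E[XY] ≤ ∫ p b`. For `Y` with the law of `b` this says that the monotone coupling is
optimal. -/
lemma hardy_littlewood {Ω : Type*} [MeasurableSpace Ω] {Q : Measure Ω} [IsProbabilityMeasure Q]
    {X Y : Ω → ℝ} (hX : Measurable X) (hY : Measurable Y) (hX2 : MemLp X 2 Q) (hY2 : MemLp Y 2 Q)
    {p b : ℝ → ℝ} (hp : Measurable p) (hbm : Measurable b) (hp2 : MemLp p 2 unitMeas)
    (hb2 : MemLp b 2 unitMeas) (hb : MonotoneOn b (Ioo 0 1))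
    (hpm : ∃ G : Set ℝ, (∀ᵐ u ∂unitMeas, u ∈ G) ∧ MonotoneOn p G)
    (hlaw : Q.map X = unitMeas.map p)
    (hco : ∀ φ : ℝ → ℝ, ConvexOn ℝ univ φ → LinGrowth φ →
      ∫ ω, φ (Y ω) ∂Q ≤ ∫ u, φ (b u) ∂unitMeas) :
    ∫ ω, X ω * Y ω ∂Q ≤ ∫ u, p u * b u ∂unitMeas := by
  have hYi : Integrable Y Q := hY2.integrable (by norm_num)
  have hbi : Integrable b unitMeas := hb2.integrable (by norm_num)
  obtain ⟨i1, e1⟩ := layer_cake hX hY (hX2.integrable_mul hY2)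
  obtain ⟨i2, e2⟩ := layer_cake hp hbm (hp2.integrable_mul hb2)
  have hmean : ∫ ω, Y ω ∂Q = ∫ u, b u ∂unitMeas := by
    refine le_antisymm (hco (fun x => x) (convexOn_id convex_univ) ⟨1, fun x => by simp⟩) ?_
    have := hco (fun x => -x) (concaveOn_id convex_univ).neg ⟨1, fun x => by simp⟩
    rw [integral_neg, integral_neg] at this
    linarith
  rw [e1, e2]
  refine integral_mono i1 i2 fun s => ?_
  have h := level_le hX hY2 hp hb2 hb hpm hlaw hco s
  have k1 := integral_mul_layer hX hYi s
  have k2 := integral_mul_layer hp hbi s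
  dsimp only
  rw [k1, k2, hmean]
  linarith

/-! ### Optimality conditions for the backward projection -/

lemma integral_comp_of_map {Ω : Type*} [MeasurableSpace Ω] {Q : Measure Ω} {ρ : Measure ℝ}
    {X : Ω → ℝ} (hX : Measurable X) (h : Q.map X = ρ) {φ : ℝ → ℝ} (hφ : Measurable φ) :
    ∫ ω, φ (X ω) ∂Q = ∫ x, φ x ∂ρ := by
  rw [← h, integral_map hX.aemeasurable hφ.aestronglyMeasurable]

/-- In dimension one, `W₂` is the `L²(0, 1)` distance between quantile functions. -/
lemma W2sq_eq {μ μ' : Measure ℝ} (hμ : IsP2 μ) (hμ' : IsP2 μ') :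
    W2sq μ μ' = ∫ u, (quant μ u - quant μ' u) ^ 2 ∂unitMeas := by
  have := hμ.1
  have := hμ'.1
  refine le_antisymm ?_ ?_
  · have := W2sq_map_le (Q := unitMeas) (measurable_quant μ) (measurable_quant μ')
    rwa [map_quant, map_quant] at this
  refine le_csInf ⟨_, μ.prod μ', ⟨inferInstance, ?_, ?_⟩, rfl⟩ ?_
  · simp
  · simp
  rintro c ⟨π, ⟨hπ, h1, h2⟩, rfl⟩
  have m1 : MemLp (fun q : ℝ × ℝ => q.1) 2 π := memLp_of_map hμ measurable_fst h1
  have m2 : MemLp (fun q : ℝ × ℝ => q.2) 2 π := memLp_of_map hμ' measurable_snd h2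
  have q1 := memLp_quant hμ
  have q2 := memLp_quant hμ'
  have key : ∫ q, q.1 * q.2 ∂π ≤ ∫ u, quant μ u * quant μ' u ∂unitMeas := by
    refine hardy_littlewood measurable_fst measurable_snd m1 m2 (measurable_quant μ)
      (measurable_quant μ') q1 q2 (quant_monotoneOn μ')
      ⟨Ioo 0 1, ae_unitMeas_mem, quant_monotoneOn μ⟩ (h1.trans (map_quant μ).symm)
      fun φ hφ _ => le_of_eq ?_
    rw [integral_comp_of_map measurable_snd h2 (convexOn_measurable hφ),
      integral_comp_of_map (measurable_quant μ') (map_quant μ') (convexOn_measurable hφ)]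
  have expand : ∀ {Ω : Type} [MeasurableSpace Ω] (Q : Measure Ω) (X Y : Ω → ℝ),
      MemLp X 2 Q → MemLp Y 2 Q → ∫ ω, (X ω - Y ω) ^ 2 ∂Q =
        ∫ ω, X ω ^ 2 ∂Q + ∫ ω, Y ω ^ 2 ∂Q - 2 * ∫ ω, X ω * Y ω ∂Q := by
    intro Ω _ Q X Y hX hY
    have hXY : Integrable (fun ω => X ω * Y ω) Q := hX.integrable_mul hY
    rw [← integral_const_mul, ← integral_add hX.integrable_sq hY.integrable_sq,
      ← integral_sub (f := fun ω => X ω ^ 2 + Y ω ^ 2)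
        (hX.integrable_sq.add hY.integrable_sq) (hXY.const_mul 2)]
    exact integral_congr_ae (ae_of_all _ fun ω => by simp only; ring)
  have s1 : ∫ q, q.1 ^ 2 ∂π = ∫ u, quant μ u ^ 2 ∂unitMeas := by
    rw [integral_comp_of_map (φ := fun x => x ^ 2) measurable_fst h1 (by fun_prop),
      integral_comp_of_map (φ := fun x => x ^ 2) (measurable_quant μ) (map_quant μ) (by fun_prop)]
  have s2 : ∫ q, q.2 ^ 2 ∂π = ∫ u, quant μ' u ^ 2 ∂unitMeas := by
    rw [integral_comp_of_map (φ := fun x => x ^ 2) measurable_snd h2 (by fun_prop),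
      integral_comp_of_map (φ := fun x => x ^ 2) (measurable_quant μ') (map_quant μ') (by fun_prop)]
  simp only [Real.norm_eq_abs, sq_abs]
  rw [expand _ _ _ q1 q2, expand π _ _ m1 m2, s1, s2]
  linarith

/-- First-order optimality of the backward projection. The pair `(X, A)` realizes the distance
from `μs` to `μ`, and `Z` is a direction along which `X` stays below `ν` in convex order. -/
lemma first_order {ν μ μs : Measure ℝ} (hν : IsP2 ν) (h : IsBackwardProj ν μ μs)
    {Ω : Type*} [MeasurableSpace Ω] {Q : Measure Ω} [IsProbabilityMeasure Q]
    {X A Z : Ω → ℝ} (hX : Measurable X) (hA : Measurable A) (hZ : Measurable Z)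
    (hX2 : MemLp X 2 Q) (hA2 : MemLp A 2 Q) (hZ2 : MemLp Z 2 Q)
    (hAμ : Q.map A = μ) (hopt : ∫ ω, (X ω - A ω) ^ 2 ∂Q = W2sq μs μ)
    (hadm : ∀ ε ∈ Ioo (0 : ℝ) 1, ∀ φ : ℝ → ℝ, ConvexOn ℝ univ φ → LinGrowth φ →
      ∫ ω, φ (X ω + ε * Z ω) ∂Q ≤ ∫ x, φ x ∂ν) :
    ∫ ω, (A ω - X ω) * Z ω ∂Q ≤ 0 := by
  have hi1 : Integrable (fun ω => (X ω - A ω) ^ 2) Q := (hX2.sub hA2).integrable_sq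
  have hi2 : Integrable (fun ω => (A ω - X ω) * Z ω) Q := (hA2.sub hX2).integrable_mul hZ2
  have hi3 : Integrable (fun ω => Z ω ^ 2) Q := hZ2.integrable_sq
  have hK : 0 ≤ ∫ ω, Z ω ^ 2 ∂Q := integral_nonneg fun _ => sq_nonneg _
  have main : ∀ ε ∈ Ioo (0 : ℝ) 1,
      2 * ∫ ω, (A ω - X ω) * Z ω ∂Q ≤ ε * ∫ ω, Z ω ^ 2 ∂Q := by
    intro ε hε
    have hYm : Measurable fun ω => X ω + ε * Z ω := hX.add (hZ.const_mul ε)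
    have hY2 : MemLp (fun ω => X ω + ε * Z ω) 2 Q := hX2.add (hZ2.const_mul ε)
    have hP2 := isP2_map hYm hY2
    have hord : ConvexOrder (Q.map fun ω => X ω + ε * Z ω) ν :=
      convexOrder_of_linGrowth hP2 hν fun φ hφ hg => by
        rw [← integral_comp_of_map hYm rfl (convexOn_measurable hφ)]
        exact hadm ε hε φ hφ hg
    have h1 := h.2.2 _ hP2 hord
    rw [W2, W2, Real.sqrt_le_sqrt_iff (W2sq_nonneg _ _)] at h1
    have h2 := W2sq_map_le (Q := Q) hYm hA
    rw [hAμ] at h2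
    have h3 : ∫ ω, (X ω + ε * Z ω - A ω) ^ 2 ∂Q = ∫ ω, (X ω - A ω) ^ 2 ∂Q
        - 2 * ε * ∫ ω, (A ω - X ω) * Z ω ∂Q + ε ^ 2 * ∫ ω, Z ω ^ 2 ∂Q := by
      rw [← integral_const_mul, ← integral_const_mul, ← integral_sub hi1 (hi2.const_mul _),
        ← integral_add (f := fun ω => (X ω - A ω) ^ 2 - 2 * ε * ((A ω - X ω) * Z ω))
          (hi1.sub (hi2.const_mul _)) (hi3.const_mul _)]
      exact integral_congr_ae (ae_of_all _ fun ω => by simp only; ring)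
    have h4 : ε * (2 * ∫ ω, (A ω - X ω) * Z ω ∂Q) ≤ ε * (ε * ∫ ω, Z ω ^ 2 ∂Q) := by
      nlinarith
    exact le_of_mul_le_mul_left h4 hε.1
  by_contra! hI
  set I := ∫ ω, (A ω - X ω) * Z ω ∂Q
  set K := ∫ ω, Z ω ^ 2 ∂Q
  -- a step length below `1` for which the quadratic term is smaller than the linear one
  have hpos : 0 < I + K + 1 := by linarith
  have := main (I / (I + K + 1)) ⟨by positivity, by rw [div_lt_one hpos]; linarith⟩
  have h5 : I / (I + K + 1) * K ≤ I := by
    rw [div_mul_eq_mul_div, div_le_iff₀ hpos]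
    nlinarith
  linarith

section Projection

variable {ν μ μs : Measure ℝ}

lemma quant_convexOrder (hμs : IsP2 μs) (hν : IsP2 ν) (h : ConvexOrder μs ν) {φ : ℝ → ℝ}
    (hφ : ConvexOn ℝ univ φ) (hg : LinGrowth φ) :
    ∫ u, φ (quant μs u) ∂unitMeas ≤ ∫ u, φ (quant ν u) ∂unitMeas := by
  have := hμs.1
  have := hν.1
  have hm := convexOn_measurable hφ
  rw [integral_comp_of_map (measurable_quant _) (map_quant _) hm,
    integral_comp_of_map (measurable_quant _) (map_quant _) hm]
  have m1 : MemLp (fun x : ℝ => x) 2 μs := memLp_of_map hμs measurable_id Measure.map_id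
  have m2 : MemLp (fun x : ℝ => x) 2 ν := memLp_of_map hν measurable_id Measure.map_id
  exact h φ hφ (hg.integrable hm m1) (hg.integrable hm m2)

/-- Moving the projection towards `ν` along the segment of quantile functions is admissible. -/
lemma projection_orthogonal (hν : IsP2 ν) (hμ : IsP2 μ) (h : IsBackwardProj ν μ μs) :
    ∫ u, (quant μ u - quant μs u) * (quant ν u - quant μs u) ∂unitMeas ≤ 0 := by
  have hμs := h.1
  have := hν.1
  have := hμ.1
  have mX := memLp_quant hμs
  have mB := memLp_quant hν
  refine first_order hν h (measurable_quant _) (measurable_quant _)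
    ((measurable_quant _).sub (measurable_quant _)) mX (memLp_quant hμ) (mB.sub mX)
    (map_quant μ) (W2sq_eq hμs hμ).symm fun ε hε φ hφ hg => ?_
  have hm := convexOn_measurable hφ
  have hq := quant_convexOrder hμs hν h.2.1 hφ hg
  rw [← integral_comp_of_map (measurable_quant ν) (map_quant ν) hm]
  have iX := hg.integrable hm mX
  have iB := hg.integrable hm mB
  have h1 : ∫ u, φ (quant μs u + ε * (quant ν u - quant μs u)) ∂unitMeas ≤
      ∫ u, ((1 - ε) * φ (quant μs u) + ε * φ (quant ν u)) ∂unitMeas := by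
    refine integral_mono (hg.integrable hm (mX.add ((mB.sub mX).const_mul ε)))
      ((iX.const_mul _).add (iB.const_mul _)) fun u => ?_
    have := hφ.2 (mem_univ (quant μs u)) (mem_univ (quant ν u)) (sub_nonneg.2 hε.2.le) hε.1.le
      (by ring)
    simp only [smul_eq_mul] at this
    refine le_trans (le_of_eq ?_) this
    congr 1
    ring
  rw [integral_add (iX.const_mul _) (iB.const_mul _), integral_const_mul,
    integral_const_mul] at h1
  have h2 := mul_le_mul_of_nonneg_left hq (sub_nonneg.2 hε.2.le)
  refine h1.trans ?_
  linarith

/-- The competitor moves `X(u)` towards `X(v)` for exactly those pairs `(u, v)` for which the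
displacement `p = quant μ - quant μs` and `X = quant μs` vary in opposite directions. This set of
pairs is symmetric, so the law of the competitor is below `μs` in convex order. -/
lemma ae_displacement (hν : IsP2 ν) (hμ : IsP2 μ) (h : IsBackwardProj ν μ μs) :
    ∀ᵐ q ∂unitMeas.prod unitMeas,
      ((quant μ q.1 - quant μs q.1) - (quant μ q.2 - quant μs q.2)) *
        (quant μs q.2 - quant μs q.1) ≤ 0 := by
  have hμs := h.1
  have := hν.1
  have := hμ.1
  set X := quant μs with hXdef
  set a := quant μ with hadef
  set P := unitMeas.prod unitMeas with hP
  have mX : Measurable X := measurable_quant _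
  have ma : Measurable a := measurable_quant _
  set D : ℝ × ℝ → ℝ := fun q => ((a q.1 - X q.1) - (a q.2 - X q.2)) * (X q.2 - X q.1) with hD
  have mX1 : Measurable fun q : ℝ × ℝ => X q.1 := mX.comp measurable_fst
  have mX2 : Measurable fun q : ℝ × ℝ => X q.2 := mX.comp measurable_snd
  have ma1 : Measurable fun q : ℝ × ℝ => a q.1 := ma.comp measurable_fst
  have ma2 : Measurable fun q : ℝ × ℝ => a q.2 := ma.comp measurable_snd
  have mD : Measurable D := ((ma1.sub mX1).sub (ma2.sub mX2)).mul (mX2.sub mX1)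
  have f1 : MeasurePreserving (Prod.fst : ℝ × ℝ → ℝ) P unitMeas := measurePreserving_fst
  have f2 : MeasurePreserving (Prod.snd : ℝ × ℝ → ℝ) P unitMeas := measurePreserving_snd
  have LX : MemLp X 2 unitMeas := memLp_quant hμs
  have La : MemLp a 2 unitMeas := memLp_quant hμ
  have LX1 : MemLp (fun q : ℝ × ℝ => X q.1) 2 P := LX.comp_measurePreserving f1
  have LX2 : MemLp (fun q : ℝ × ℝ => X q.2) 2 P := LX.comp_measurePreserving f2
  have La1 : MemLp (fun q : ℝ × ℝ => a q.1) 2 P := La.comp_measurePreserving f1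
  have La2 : MemLp (fun q : ℝ × ℝ => a q.2) 2 P := La.comp_measurePreserving f2
  set S : Set (ℝ × ℝ) := {q | 0 < D q} with hS
  have mS : MeasurableSet S := measurableSet_lt measurable_const mD
  have hSswap : ∀ q : ℝ × ℝ, q.swap ∈ S ↔ q ∈ S := fun q => by
    have : D q.swap = D q := by simp only [hD, Prod.fst_swap, Prod.snd_swap]; ring
    simp only [hS, mem_ofPred_eq, this]
  have swapInt : ∀ F : ℝ × ℝ → ℝ, ∫ q, F q.swap ∂P = ∫ q, F q ∂P := fun F =>
    integral_prod_swap F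
  have fstInt : ∀ F : ℝ → ℝ, Measurable F → ∫ q, F q.1 ∂P = ∫ u, F u ∂unitMeas := by
    intro F hF
    have e := integral_map (μ := P) (f := F) measurable_fst.aemeasurable hF.aestronglyMeasurable
    rw [f1.map_eq] at e
    exact e.symm
  set Z : ℝ × ℝ → ℝ := S.indicator fun q => X q.2 - X q.1 with hZ
  have mZ : Measurable Z := (mX2.sub mX1).indicator mS
  have LZ : MemLp Z 2 P := (LX2.sub LX1).indicator mS
  have hfo : ∫ q, (a q.1 - X q.1) * Z q ∂P ≤ 0 := by
    refine first_order hν h mX1 ma1 mZ LX1 La1 LZ ?_ ?_ ?_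
    · rw [← map_quant μ, ← f1.map_eq, Measure.map_map ma measurable_fst]
      rfl
    · rw [W2sq_eq hμs hμ]
      exact fstInt _ ((mX.sub ma).pow_const 2)
    · intro ε hε φ hφ hg
      have hm := convexOn_measurable hφ
      have hq := quant_convexOrder hμs hν h.2.1 hφ hg
      rw [← integral_comp_of_map (measurable_quant ν) (map_quant ν) hm]
      have iX1 := hg.integrable hm LX1
      have iX2 := hg.integrable hm LX2
      have iI : Integrable (S.indicator fun q => φ (X q.2) - φ (X q.1)) P :=
        (iX2.sub iX1).indicator mS
      have h1 : ∫ q, φ (X q.1 + ε * Z q) ∂P ≤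
          ∫ q, (φ (X q.1) + ε * S.indicator (fun q => φ (X q.2) - φ (X q.1)) q) ∂P := by
        refine integral_mono (hg.integrable hm (LX1.add (LZ.const_mul ε)))
          (iX1.add (iI.const_mul _)) fun q => ?_
        by_cases hqS : q ∈ S
        · have := hφ.2 (mem_univ (X q.1)) (mem_univ (X q.2)) (sub_nonneg.2 hε.2.le) hε.1.le
            (by ring)
          simp only [smul_eq_mul] at this
          simp only [hZ, indicator_of_mem hqS]
          refine le_trans (le_of_eq ?_) (this.trans (le_of_eq ?_))
          · congr 1
            ring
          · ring
        · simp [hZ, indicator_of_notMem hqS]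
      have h2 : ∫ q, S.indicator (fun q => φ (X q.2) - φ (X q.1)) q ∂P = 0 := by
        have e := swapInt (S.indicator fun q => φ (X q.2) - φ (X q.1))
        have e' : (fun q : ℝ × ℝ => S.indicator (fun q => φ (X q.2) - φ (X q.1)) q.swap) =
            fun q => -S.indicator (fun q => φ (X q.2) - φ (X q.1)) q := by
          funext q
          by_cases hqS : q ∈ S
          · rw [indicator_of_mem hqS, indicator_of_mem ((hSswap q).2 hqS)]
            simp
          · rw [indicator_of_notMem hqS, indicator_of_notMem (mt (hSswap q).1 hqS)]
            simp
        rw [e', integral_neg] at e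
        linarith
      have h3 : ∫ q, φ (X q.1) ∂P = ∫ u, φ (X u) ∂unitMeas := fstInt _ (hm.comp mX)
      rw [integral_add iX1 (iI.const_mul _), integral_const_mul, h2, h3] at h1
      linarith
  have hZswap : ∀ q : ℝ × ℝ, Z q.swap = -Z q := fun q => by
    by_cases hqS : q ∈ S
    · simp only [hZ]
      rw [indicator_of_mem hqS, indicator_of_mem ((hSswap q).2 hqS)]
      simp
    · simp only [hZ]
      rw [indicator_of_notMem hqS, indicator_of_notMem (mt (hSswap q).1 hqS)]
      simp
  have i1 : Integrable (fun q => (a q.1 - X q.1) * Z q) P := (La1.sub LX1).integrable_mul LZ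
  have i2 : Integrable (fun q => (a q.2 - X q.2) * Z q) P := (La2.sub LX2).integrable_mul LZ
  have hfo2 : ∫ q, (a q.2 - X q.2) * Z q ∂P = -∫ q, (a q.1 - X q.1) * Z q ∂P := by
    rw [← swapInt, ← integral_neg]
    refine integral_congr_ae (ae_of_all _ fun q => ?_)
    simp only [hZswap, Prod.snd_swap]
    ring
  have hsum : ∫ q, ((a q.1 - X q.1) * Z q - (a q.2 - X q.2) * Z q) ∂P ≤ 0 := by
    rw [integral_sub i1 i2, hfo2]
    linarith
  have hpt : ∀ q, (a q.1 - X q.1) * Z q - (a q.2 - X q.2) * Z q = S.indicator D q := fun q => by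
    by_cases hqS : q ∈ S
    · simp only [hZ, indicator_of_mem hqS, hD]
      ring
    · simp [hZ, indicator_of_notMem hqS]
  have hnn : 0 ≤ fun q => (a q.1 - X q.1) * Z q - (a q.2 - X q.2) * Z q := fun q => by
    simp only [hpt]
    exact indicator_nonneg (fun q hq => le_of_lt hq) q
  have h0 := (integral_eq_zero_iff_of_nonneg hnn (i1.sub i2)).1
    (le_antisymm hsum (integral_nonneg hnn))
  filter_upwards [h0] with q hq
  by_contra! hcon
  have hqS : q ∈ S := hcon
  simp only [hpt, indicator_of_mem hqS, Pi.zero_apply] at hq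
  exact absurd hq (ne_of_gt hcon)

/-- The displacement `quant μ - quant μs` is increasing up to a null set. Where `quant μs` is
constant this follows from the monotonicity of `quant μ`; elsewhere from `ae_displacement`. -/
lemma displacement_monotone (hν : IsP2 ν) (hμ : IsP2 μ) (h : IsBackwardProj ν μ μs) :
    ∃ G : Set ℝ, (∀ᵐ u ∂unitMeas, u ∈ G) ∧ MonotoneOn (fun u => quant μ u - quant μs u) G := by
  set p : ℝ → ℝ := fun u => quant μ u - quant μs u with hp
  have key : ∀ q : ℝ × ℝ, (p q.1 - p q.2) * (quant μs q.2 - quant μs q.1) ≤ 0 →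
      q.1 ∈ Ioo (0 : ℝ) 1 → q.2 ∈ Ioo (0 : ℝ) 1 → q.1 < q.2 → p q.1 ≤ p q.2 := by
    rintro ⟨u, v⟩ hq hu hv huv
    have hX := quant_monotoneOn μs hu hv huv.le
    have ha := quant_monotoneOn μ hu hv huv.le
    dsimp only at hq hX ha ⊢
    by_contra! hlt
    rcases hX.eq_or_lt with he | hl
    · simp only [hp] at hlt
      linarith
    · nlinarith [mul_pos (sub_pos.2 hlt) (sub_pos.2 hl)]
  have hae := ae_displacement hν hμ h
  have hae' := (Measure.measurePreserving_swap (μ := unitMeas)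
    (ν := unitMeas)).quasiMeasurePreserving.ae hae
  have hA := Measure.ae_ae_of_ae_prod hae
  have hB := Measure.ae_ae_of_ae_prod hae'
  refine ⟨{u | u ∈ Ioo (0 : ℝ) 1 ∧ (∀ᵐ v ∂unitMeas, u < v → p u ≤ p v) ∧
    (∀ᵐ v ∂unitMeas, v < u → p v ≤ p u)}, ?_, ?_⟩
  · filter_upwards [hA, hB, ae_unitMeas_mem] with u h1 h2 hu
    refine ⟨hu, ?_, ?_⟩
    · filter_upwards [h1, ae_unitMeas_mem] with v hv hv1 huv
      exact key (u, v) hv hu hv1 huv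
    · filter_upwards [h2, ae_unitMeas_mem] with v hv hv1 huv
      exact key (v, u) hv hv1 hu huv
  · rintro u ⟨hu, hu1, -⟩ v ⟨hv, -, hv2⟩ huv
    rcases huv.eq_or_lt with rfl | huv
    · exact le_rfl
    by_contra! hlt
    -- otherwise almost no point of `(u, v)` could carry an intermediate value of `p`
    have hnull : ∀ᵐ w ∂unitMeas, w ∉ Ioo u v := by
      filter_upwards [hu1, hv2] with w h1 h2 hw
      exact absurd ((h1 hw.1).trans (h2 hw.2)) (not_le.2 hlt)
    have hz : unitMeas (Ioo u v) = 0 := by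
      simpa using (measure_eq_zero_iff_ae_notMem (μ := unitMeas) (s := Ioo u v)).2 hnull
    rw [unitMeas, Measure.restrict_apply measurableSet_Ioo,
      inter_eq_left.2 (Ioo_subset_Ioo hu.1.le hv.2.le), Real.volume_Ioo,
      ENNReal.ofReal_eq_zero] at hz
    linarith

end Projection

/-! ### Stability -/

/-- The displacement of one projection problem pairs with the quantile gap of another one. -/
lemma displacement_pairing {ν μ μs ν' μs' : Measure ℝ} (hν : IsP2 ν) (hμ : IsP2 μ)
    (h : IsBackwardProj ν μ μs) (hν' : IsP2 ν') (hμs' : IsP2 μs') (h' : ConvexOrder μs' ν') :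
    0 ≤ ∫ u, (quant μ u - quant μs u) * (quant ν' u - quant μs' u) ∂unitMeas := by
  have mp : Measurable fun u => quant μ u - quant μs u :=
    (measurable_quant μ).sub (measurable_quant μs)
  have Lp : MemLp (fun u => quant μ u - quant μs u) 2 unitMeas :=
    (memLp_quant hμ).sub (memLp_quant h.1)
  have Lb := memLp_quant hν'
  have Lx := memLp_quant hμs'
  have hl := hardy_littlewood mp (measurable_quant μs') Lp Lx mp (measurable_quant ν') Lp Lb
    (quant_monotoneOn ν') (displacement_monotone hν hμ h) rfl
    fun φ hφ hg => quant_convexOrder hμs' hν' h' hφ hg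
  have i1 : Integrable (fun u => (quant μ u - quant μs u) * quant ν' u) unitMeas :=
    Lp.integrable_mul Lb
  have i2 : Integrable (fun u => (quant μ u - quant μs u) * quant μs' u) unitMeas :=
    Lp.integrable_mul Lx
  simp_rw [mul_sub]
  rw [integral_sub i1 i2]
  linarith

/-- The Hilbert-space inequality behind the stability estimate: `ξ` lies in the ball with diameter
`[α, β]`. -/
lemma norm_le_of_inner_nonpos {H : Type*} [NormedAddCommGroup H] [InnerProductSpace ℝ H]
    {ξ α β : H} (h : inner ℝ (α - ξ) (β - ξ) ≤ 0) : ‖ξ‖ ≤ ‖α‖ + ‖β‖ := by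
  have h1 := norm_add_sq_real (α - ξ) (β - ξ)
  have h2 := norm_sub_sq_real (α - ξ) (β - ξ)
  rw [sub_sub_sub_cancel_right] at h2
  have h3 : ‖α - ξ + (β - ξ)‖ ≤ ‖α - β‖ :=
    (sq_le_sq₀ (norm_nonneg _) (norm_nonneg _)).1 (by linarith)
  have h4 : (2 : ℝ) • ξ = (α + β) - (α - ξ + (β - ξ)) := by
    rw [two_smul]
    abel
  have h5 : 2 * ‖ξ‖ ≤ ‖α + β‖ + ‖α - ξ + (β - ξ)‖ := by
    rw [← Real.norm_two, ← norm_smul, h4]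
    exact norm_sub_le _ _
  linarith [norm_add_le α β, norm_sub_le α β]

lemma norm_toLp_eq {f : ℝ → ℝ} (hf : MemLp f 2 unitMeas) :
    ‖hf.toLp f‖ = Real.sqrt (∫ u, f u ^ 2 ∂unitMeas) := by
  rw [eq_comm, Real.sqrt_eq_iff_eq_sq (integral_nonneg fun _ => sq_nonneg _) (norm_nonneg _),
    ← real_inner_self_eq_norm_sq, L2.inner_def]
  refine integral_congr_ae ?_
  filter_upwards [hf.coeFn_toLp] with u hu
  simp [hu, sq]

/-- Lipschitz stability of the backward projection in one dimension. -/
theorem stmt8 (μ μ' ν ν' μs μs' : Measure ℝ)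
    (hμ : IsP2 μ) (hμ' : IsP2 μ') (hν : IsP2 ν) (hν' : IsP2 ν')
    (hμs : IsBackwardProj ν μ μs) (hμs' : IsBackwardProj ν' μ' μs') :
    W2 μs μs' ≤ W2 μ μ' + W2 ν ν' := by
  have La := memLp_quant hμ
  have La' := memLp_quant hμ'
  have Lb := memLp_quant hν
  have Lb' := memLp_quant hν'
  have Lx := memLp_quant hμs.1
  have Lx' := memLp_quant hμs'.1
  rw [W2, W2, W2, W2sq_eq hμs.1 hμs'.1, W2sq_eq hμ hμ', W2sq_eq hν hν']
  have Mα : MemLp (fun u => quant μ u - quant μ' u) 2 unitMeas := La.sub La'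
  have Mβ : MemLp (fun u => quant ν u - quant ν' u) 2 unitMeas := Lb.sub Lb'
  have Mξ : MemLp (fun u => quant μs u - quant μs' u) 2 unitMeas := Lx.sub Lx'
  rw [← norm_toLp_eq Mα, ← norm_toLp_eq Mβ, ← norm_toLp_eq Mξ]
  apply norm_le_of_inner_nonpos
  rw [← MemLp.toLp_sub, ← MemLp.toLp_sub, L2.inner_def]
  -- with displacements `p`, `p'` and quantile gaps `g`, `g'` the inner product is
  -- `∫ (p - p') (g - g')`; the diagonal terms are nonpositive, the mixed ones nonnegative
  have d1 := projection_orthogonal hν hμ hμs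
  have d2 := projection_orthogonal hν' hμ' hμs'
  have c1 := displacement_pairing hν hμ hμs hν' hμs'.1 hμs'.2.1
  have c2 := displacement_pairing hν' hμ' hμs' hν hμs.1 hμs.2.1
  have i1 : Integrable (fun u => (quant μ u - quant μs u) * (quant ν u - quant μs u)) unitMeas :=
    (La.sub Lx).integrable_mul (Lb.sub Lx)
  have i2 : Integrable (fun u => (quant μ' u - quant μs' u) * (quant ν' u - quant μs' u))
      unitMeas := (La'.sub Lx').integrable_mul (Lb'.sub Lx')
  have i3 : Integrable (fun u => (quant μ u - quant μs u) * (quant ν' u - quant μs' u))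
      unitMeas := (La.sub Lx).integrable_mul (Lb'.sub Lx')
  have i4 : Integrable (fun u => (quant μ' u - quant μs' u) * (quant ν u - quant μs u))
      unitMeas := (La'.sub Lx').integrable_mul (Lb.sub Lx)
  have e : ∫ u, ((quant μ u - quant μs u) * (quant ν u - quant μs u) +
        (quant μ' u - quant μs' u) * (quant ν' u - quant μs' u)) -
      ((quant μ u - quant μs u) * (quant ν' u - quant μs' u) +
        (quant μ' u - quant μs' u) * (quant ν u - quant μs u)) ∂unitMeas ≤ 0 := by
    have := integral_sub (i1.add i2) (i3.add i4)
    simp only [Pi.add_apply] at this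
    rw [this, integral_add i1 i2, integral_add i3 i4]
    linarith
  refine le_trans (le_of_eq (integral_congr_ae ?_)) e
  filter_upwards [(Mα.sub Mξ).coeFn_toLp, (Mβ.sub Mξ).coeFn_toLp] with u h1 h2
  rw [h1, h2]
  simp only [Pi.sub_apply, RCLike.inner_apply, conj_trivial]
  ring

end
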